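/- There exist constants ε₀ ∈ (0,1) and C > 0 with the following property. Let ν ∈ (0,1], k ∈ ℤ with |k| ≥ 1 and νk² ≤ 1, ε ∈ (0, ε₀], λ ∈ ℝ, and set δ = ν^{1/3}|k|^{−1/3}. Let w : [−1,1] → ℂ be twice continuously differentiable with w(−1) = w(1) = 0, let F(y) = −ν(w''(y) − k²w(y)) + ik(y−λ)w(y) − ε·ν^{1/3}|k|^{2/3}w(y), and let M ≥ 0 dominate F in H^{−1}. Define χ : [−1,1] → ℝ by χ(y) = 1/(y−λ) when |y−λ| ≥ δ and χ(y) = 2(y−λ)/δ² − (y−λ)³/δ⁴ when |y−λ| < δ. Let j ∈ {1,−1} and let f : [−1,1] → ℂ be continuously differentiable with f(−j) = 0. Then |⟨w,f⟩| ≤ C|k|^{−1}M·( δ^{−3/2}·sup_{y∈(−1,1)∩(λ−δ,λ+δ)}|f(y)| + |f(j)|·(|j−λ|+δ)^{−3/4}·δ^{−3/4} + (‖fχ‖_{L²}² + ‖(fχ)'‖_{L²}²)^{1/2} + δ^{−1}‖fχ‖_{L²} ), where the supremum is taken to be 0 if (−1,1)∩(λ−δ,λ+δ) is empty. -/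

import Mathlib

/-- The `L²` norm of a function on the interval `[-1,1]`. -/
noncomputable def nL2 (f : ℝ → ℂ) : ℝ :=
  (∫ y in Set.Icc (-1:ℝ) 1, ‖f y‖ ^ 2) ^ ((1:ℝ)/2)

/-- The `L²` pairing of two functions on the interval `[-1,1]`. -/
noncomputable def innI (f g : ℝ → ℂ) : ℂ :=
  ∫ y in Set.Icc (-1:ℝ) 1, f y * (starRingEnd ℂ) (g y)

/-- `M ≥ 0` dominates `F` in `H^{-1}` : `|⟨F, φ⟩| ≤ M ‖φ‖_{H¹}` for every `C¹` function
vanishing at `±1`. -/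
def Dominates (F : ℝ → ℂ) (M : ℝ) : Prop :=
  ∀ g : ℝ → ℂ, ContDiff ℝ 1 g → g (-1) = 0 → g 1 = 0 →
    ‖innI F g‖ ≤ M * ((nL2 g ^ 2 + nL2 (deriv g) ^ 2) ^ ((1:ℝ)/2))

/-!
Set `ν = |k| δ³`. Pairing the equation with `w` controls `w'` by `M` and `w`. Pairing it instead
with `ρ w`, where `ρ` is a smooth sign of `y - λ` with transition layer `|y - λ| ≤ δ`, makes the
transport term coercive, up to the layer itself, where `w` is recovered from an integration by
parts of `∫ ρ' |w|²`. Together these bound `δ² ‖w‖`, `δ³ ‖w'‖` and `δ^{3/2} ‖|y - λ|^{1/2} w‖` by a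
multiple of `M / |k|`, and `ε ≤ ε₀` keeps the term `-ε ν^{1/3} |k|^{2/3} w` from spoiling this.

To bound `⟨w, f⟩`, write `f = (1 - (y - λ)χ) f + (y - λ)χ f`. The first summand lives in the layer
`|y - λ| ≤ δ` of measure at most `2δ`, which gives the supremum term. For the second,
`⟨w, (y - λ)χ f⟩ = ⟨(y - λ) w, χ f⟩` is read off from the equation tested against `χ f`, except that
`χ f` need not vanish at `j`. It is corrected there in a layer of width `r²`; with
`D = |j - λ| + δ`, the derivative of the corrector costs `1 / r` and its pairing with `(y - λ) w`
costs `r √D / δ^{3/2}`, which the choice `r = δ^{3/4} D^{-1/4}` makes equal. As `|χ(j)| ≤ 4 / D`,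
the price is `1 / (r D) = δ^{-3/4} D^{-3/4}`.
-/

open MeasureTheory Set

section Calculus

variable {E : Type*} [NormedAddCommGroup E]

theorem memLp_restrict_Icc_of_continuous {f : ℝ → E} (hf : Continuous f) (a b : ℝ) (p : ENNReal) :
    MemLp f p (volume.restrict (Icc a b)) := by
  obtain ⟨B, hB⟩ := isCompact_Icc.exists_bound_of_continuousOn (s := Icc a b) hf.continuousOn
  exact .of_bound hf.aestronglyMeasurable B
    ((ae_restrict_mem measurableSet_Icc).mono fun y hy ↦ hB y hy)

theorem norm_le_iSup_norm_of_subset_Icc {f : ℝ → E} {s : Set ℝ} {a b x : ℝ} (hf : Continuous f)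
    (hs : s ⊆ Icc a b) (hx : x ∈ s) : ‖f x‖ ≤ ⨆ y : s, ‖f y‖ :=
  le_ciSup_set (f := fun y ↦ ‖f y‖)
    ((isCompact_Icc.bddAbove_image hf.norm.continuousOn).mono (image_mono hs)) hx

theorem contDiff_one_of_hasDerivAt_ne [NormedSpace ℝ E] {f f' : ℝ → E} {a : ℝ}
    (h : ∀ x ≠ a, HasDerivAt f (f' x) x) (hf : ContinuousAt f a) (hf' : Continuous f') :
    ContDiff ℝ 1 f := by
  have hderiv := hasDerivAt_of_hasDerivAt_of_ne' h hf hf'.continuousAt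
  rw [contDiff_one_iff_deriv, show deriv f = f' from funext fun x ↦ (hderiv x).deriv]
  exact ⟨fun x ↦ (hderiv x).differentiableAt, hf'⟩

theorem contDiff_ofReal_comp {n : WithTop ℕ∞} {θ : ℝ → ℝ} (hθ : ContDiff ℝ n θ) :
    ContDiff ℝ n fun y ↦ (θ y : ℂ) :=
  Complex.ofRealCLM.contDiff.comp hθ

end Calculus

section L2

variable {f g : ℝ → ℂ}

theorem nL2_eq_lpNorm (hf : Continuous f) :
    nL2 f = lpNorm f 2 (volume.restrict (Icc (-1 : ℝ) 1)) := by
  simp [nL2, lpNorm_eq_integral_norm_rpow_toReal two_ne_zero ENNReal.ofNat_ne_top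
    hf.aestronglyMeasurable]

theorem nL2_nonneg (f : ℝ → ℂ) : 0 ≤ nL2 f :=
  Real.rpow_nonneg (integral_nonneg fun _ ↦ by positivity) _

theorem nL2_sq (f : ℝ → ℂ) : nL2 f ^ 2 = ∫ y in Icc (-1 : ℝ) 1, ‖f y‖ ^ 2 := by
  rw [nL2, ← Real.sqrt_eq_rpow, Real.sq_sqrt (integral_nonneg fun _ ↦ by positivity)]

theorem nL2_const_mul (hf : Continuous f) (c : ℂ) : nL2 (fun y ↦ c * f y) = ‖c‖ * nL2 f := by
  rw [nL2_eq_lpNorm hf, nL2_eq_lpNorm (by fun_prop)]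
  exact lpNorm_const_smul c f _

theorem nL2_add_le (hf : Continuous f) (hg : Continuous g) :
    nL2 (fun y ↦ f y + g y) ≤ nL2 f + nL2 g := by
  rw [nL2_eq_lpNorm hf, nL2_eq_lpNorm hg, nL2_eq_lpNorm (by fun_prop)]
  exact lpNorm_add_le (memLp_restrict_Icc_of_continuous hf _ _ _) one_le_two

theorem nL2_sub_const_mul_le (hf : Continuous f) (hg : Continuous g) (c : ℂ) :
    nL2 (fun y ↦ f y - c * g y) ≤ nL2 f + ‖c‖ * nL2 g := by
  simpa [sub_eq_add_neg, ← neg_mul, nL2_const_mul hg] using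
    nL2_add_le hf (g := fun y ↦ -c * g y) (by fun_prop)

theorem nL2_ofReal_mul_le {θ : ℝ → ℝ} {B : ℝ} (hθ : Continuous θ) (hf : Continuous f)
    (hB : ∀ y ∈ Icc (-1 : ℝ) 1, |θ y| ≤ B) : nL2 (fun y ↦ (θ y : ℂ) * f y) ≤ B * nL2 f := by
  have hB0 : 0 ≤ B := (abs_nonneg _).trans (hB 0 (by norm_num))
  refine le_of_sq_le_sq ?_ (mul_nonneg hB0 (nL2_nonneg f))
  rw [mul_pow, nL2_sq, nL2_sq, ← integral_const_mul]
  refine setIntegral_mono_on (Continuous.integrableOn_Icc (by fun_prop))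
    (Continuous.integrableOn_Icc (by fun_prop)) measurableSet_Icc fun y hy ↦ ?_
  rw [norm_mul, mul_pow, Complex.norm_real, Real.norm_eq_abs]
  gcongr
  exact hB y hy

theorem nL2_sq_le_of_support {B c r : ℝ} (hr : 0 ≤ r) (hB : ∀ y ∈ Icc (-1 : ℝ) 1, ‖f y‖ ≤ B)
    (hsupp : ∀ y ∈ Icc (-1 : ℝ) 1, r < |y - c| → f y = 0) : nL2 f ^ 2 ≤ B ^ 2 * (2 * r) := by
  have hrestrict : nL2 f ^ 2 = ∫ y in Icc (-1 : ℝ) 1 ∩ Icc (c - r) (c + r), ‖f y‖ ^ 2 := by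
    rw [nL2_sq]
    refine setIntegral_eq_of_subset_of_forall_sdiff_eq_zero measurableSet_Icc inter_subset_left
      fun y hy ↦ ?_
    have hfar : r < |y - c| := by
      by_contra! hnear
      exact hy.2 ⟨hy.1, by constructor <;> linarith [abs_le.1 hnear]⟩
    simp [hsupp y hy.1 hfar]
  calc nL2 f ^ 2
      ≤ B ^ 2 * volume.real (Icc (-1 : ℝ) 1 ∩ Icc (c - r) (c + r)) := by
        rw [hrestrict]
        refine (Real.le_norm_self _).trans (norm_setIntegral_le_of_norm_le_const
          ((measure_mono inter_subset_left).trans_lt measure_Icc_lt_top) fun y hy ↦ ?_)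
        rw [norm_pow, norm_norm]
        gcongr
        exact hB y hy.1
    _ ≤ B ^ 2 * volume.real (Icc (c - r) (c + r)) := by
        gcongr
        · exact measure_Icc_lt_top.ne
        · exact inter_subset_right
    _ = B ^ 2 * (2 * r) := by
        rw [Real.volume_real_Icc_of_le (by linarith)]
        ring

theorem nL2_sq_add_nL2_sq_rpow_le (f g : ℝ → ℂ) :
    (nL2 f ^ 2 + nL2 g ^ 2) ^ ((1 : ℝ) / 2) ≤ nL2 f + nL2 g := by
  have hf := nL2_nonneg f
  have hg := nL2_nonneg g
  rw [← Real.sqrt_eq_rpow]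
  exact Real.sqrt_le_iff.2 ⟨by positivity, by nlinarith⟩

theorem integral_norm_mul_norm_le (hf : Continuous f) (hg : Continuous g) :
    ∫ y in Icc (-1 : ℝ) 1, ‖f y‖ * ‖g y‖ ≤ nL2 f * nL2 g := by
  simpa [nL2] using integral_mul_norm_le_Lp_mul_Lq Real.HolderConjugate.two_two
    (memLp_restrict_Icc_of_continuous hf (-1) 1 _) (memLp_restrict_Icc_of_continuous hg (-1) 1 _)

theorem norm_innI_le_of_norm_mul_norm_le {u v : ℝ → ℂ} {C : ℝ} (hf : Continuous f)
    (hg : Continuous g) (hC : 0 ≤ C)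
    (h : ∀ y ∈ Ioo (-1 : ℝ) 1, ‖u y‖ * ‖v y‖ ≤ C * (‖f y‖ * ‖g y‖)) :
    ‖innI u v‖ ≤ C * (nL2 f * nL2 g) := by
  calc ‖innI u v‖
      ≤ ∫ y in Ioo (-1 : ℝ) 1, C * (‖f y‖ * ‖g y‖) := by
        rw [innI, integral_Icc_eq_integral_Ioo]
        refine norm_integral_le_of_norm_le ?_ ?_
        · exact (Continuous.integrableOn_Icc (by fun_prop)).mono_set Ioo_subset_Icc_self
        · filter_upwards [ae_restrict_mem measurableSet_Ioo] with y hy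
          simpa only [norm_mul, RCLike.norm_conj] using h y hy
    _ = C * ∫ y in Icc (-1 : ℝ) 1, ‖f y‖ * ‖g y‖ := by
        rw [← integral_Icc_eq_integral_Ioo, integral_const_mul]
    _ ≤ C * (nL2 f * nL2 g) := by
        gcongr
        exact integral_norm_mul_norm_le hf hg

theorem norm_innI_le (hf : Continuous f) (hg : Continuous g) : ‖innI f g‖ ≤ nL2 f * nL2 g := by
  simpa using norm_innI_le_of_norm_mul_norm_le (u := f) (v := g) hf hg zero_le_one (by simp)

theorem innI_add_left {u : ℝ → ℂ} (hf : Continuous f) (hg : Continuous g) (hu : Continuous u) :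
    innI (fun y ↦ f y + g y) u = innI f u + innI g u := by
  simp only [innI, add_mul]
  exact integral_add (Continuous.integrableOn_Icc (by fun_prop))
    (Continuous.integrableOn_Icc (by fun_prop))

theorem innI_add_right {u : ℝ → ℂ} (hu : Continuous u) (hf : Continuous f) (hg : Continuous g) :
    innI u (fun y ↦ f y + g y) = innI u f + innI u g := by
  simp only [innI, map_add, mul_add]
  exact integral_add (Continuous.integrableOn_Icc (by fun_prop))
    (Continuous.integrableOn_Icc (by fun_prop))

theorem innI_const_mul_left (c : ℂ) (f g : ℝ → ℂ) : innI (fun y ↦ c * f y) g = c * innI f g := by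
  simp only [innI, mul_assoc, integral_const_mul]

theorem innI_ofReal_mul_right (θ : ℝ → ℝ) (f g : ℝ → ℂ) :
    innI f (fun y ↦ (θ y : ℂ) * g y) = innI (fun y ↦ (θ y : ℂ) * f y) g := by
  simp only [innI, map_mul, Complex.conj_ofReal]
  congr 1
  ext y
  ring

theorem innI_ofReal_mul_self (θ : ℝ → ℝ) (f : ℝ → ℂ) :
    innI (fun y ↦ (θ y : ℂ) * f y) f = (∫ y in Icc (-1 : ℝ) 1, θ y * ‖f y‖ ^ 2 : ℝ) := by
  simp only [innI, mul_assoc, Complex.mul_conj, Complex.normSq_eq_norm_sq,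
    ← Complex.ofReal_mul]
  exact integral_ofReal

theorem innI_self (f : ℝ → ℂ) : innI f f = (nL2 f ^ 2 : ℝ) := by
  simpa [nL2_sq] using innI_ofReal_mul_self (fun _ ↦ 1) f

theorem innI_deriv_left {u v : ℝ → ℂ} (hu : ContDiff ℝ 1 u) (hv : ContDiff ℝ 1 v)
    (hleft : v (-1) = 0) (hright : v 1 = 0) : innI (deriv u) v = -innI u (deriv v) := by
  have hu' := hu.continuous_deriv le_rfl
  have hparts := intervalIntegral.integral_mul_deriv_eq_deriv_mul (a := -1) (b := 1)
    (fun x _ ↦ (hu.differentiable one_ne_zero x).hasDerivAt)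
    (fun x _ ↦ (hv.differentiable one_ne_zero x).hasDerivAt.star)
    (hu'.intervalIntegrable _ _) (Continuous.intervalIntegrable (by fun_prop) _ _)
  simp only [hleft, hright, star_zero, mul_zero, sub_self, zero_sub,
    intervalIntegral.integral_of_le (show (-1 : ℝ) ≤ 1 by norm_num),
    ← integral_Icc_eq_integral_Ioc] at hparts
  rw [innI, innI, eq_neg_iff_add_eq_zero, add_comm]
  exact eq_neg_iff_add_eq_zero.1 hparts

end L2

section Multiplier

/-- The resolvent operator `w ↦ -ν(w'' - k²w) + ik(y - λ)w - ew` of the linearised flow near the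
Couette profile `y`, with `lam` and `e` in the roles of `λ` and `ε ν^{1/3} |k|^{2/3}`. -/
noncomputable def resolventOp (ν k lam e : ℝ) (w : ℝ → ℂ) : ℝ → ℂ := fun y ↦
  -(ν : ℂ) * (deriv (deriv w) y - (k : ℂ) ^ 2 * w y)
    + Complex.I * (k : ℂ) * ((y : ℂ) - (lam : ℂ)) * w y - (e : ℂ) * w y

/-- The standing assumption on `w`: a `C²` function vanishing at `±1` whose image under the
resolvent operator is dominated by `M` in `H^{-1}`. -/
structure HasResolventBound (ν k lam e M : ℝ) (w : ℝ → ℂ) : Prop where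
  contDiff : ContDiff ℝ 2 w
  apply_neg_one : w (-1) = 0
  apply_one : w 1 = 0
  bound_nonneg : 0 ≤ M
  dominates : Dominates (resolventOp ν k lam e w) M

variable {ν k lam e M : ℝ} {w g : ℝ → ℂ}

theorem innI_resolventOp (hw : ContDiff ℝ 2 w) (hg : ContDiff ℝ 1 g) (hleft : g (-1) = 0)
    (hright : g 1 = 0) :
    innI (resolventOp ν k lam e w) g = ν * innI (deriv w) (deriv g)
      + ((ν * k ^ 2 - e : ℝ) : ℂ) * innI w g
      + Complex.I * k * innI (fun y ↦ ((y - lam : ℝ) : ℂ) * w y) g := by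
  have hw' : ContDiff ℝ 1 (deriv w) := hw.deriv'
  have hgc := hg.continuous
  have hop : resolventOp ν k lam e w = fun y ↦ (-(ν : ℂ) * deriv (deriv w) y
      + ((ν * k ^ 2 - e : ℝ) : ℂ) * w y) + Complex.I * k * (((y - lam : ℝ) : ℂ) * w y) := by
    ext y
    simp only [resolventOp]
    push_cast
    ring
  rw [hop, innI_add_left (by fun_prop) (by fun_prop) hgc,
    innI_add_left (by fun_prop) (by fun_prop) hgc]
  simp only [innI_const_mul_left, innI_deriv_left hw' hg hleft hright]
  ring

namespace HasResolventBound

theorem contDiff_one (h : HasResolventBound ν k lam e M w) : ContDiff ℝ 1 w :=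
  h.contDiff.of_le one_le_two

theorem continuous (h : HasResolventBound ν k lam e M w) : Continuous w :=
  h.contDiff.continuous

theorem continuous_deriv (h : HasResolventBound ν k lam e M w) : Continuous (deriv w) :=
  h.contDiff.continuous_deriv one_le_two

theorem norm_innI_resolventOp_le (h : HasResolventBound ν k lam e M w) (hg : ContDiff ℝ 1 g)
    (hleft : g (-1) = 0) (hright : g 1 = 0) :
    ‖innI (resolventOp ν k lam e w) g‖ ≤ M * (nL2 g + nL2 (deriv g)) :=
  (h.dominates g hg hleft hright).trans
    (mul_le_mul_of_nonneg_left (nL2_sq_add_nL2_sq_rpow_le _ _) h.bound_nonneg)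

theorem energy_le (h : HasResolventBound ν k lam e M w) :
    ν * nL2 (deriv w) ^ 2 + (ν * k ^ 2 - e) * nL2 w ^ 2
      ≤ M * √(nL2 w ^ 2 + nL2 (deriv w) ^ 2) := by
  have hre : (innI (resolventOp ν k lam e w) w).re
      = ν * nL2 (deriv w) ^ 2 + (ν * k ^ 2 - e) * nL2 w ^ 2 := by
    rw [innI_resolventOp h.contDiff h.contDiff_one h.apply_neg_one h.apply_one, innI_self,
      innI_self, innI_ofReal_mul_self]
    simp [-Complex.ofReal_pow, -Complex.ofReal_mul, -Complex.ofReal_sub]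
  rw [← hre, Real.sqrt_eq_rpow]
  exact (Complex.re_le_norm _).trans
    (h.dominates w h.contDiff_one h.apply_neg_one h.apply_one)

end HasResolventBound

variable {ρ : ℝ → ℝ} {B : ℝ}

theorem deriv_ofReal_mul (hρ : ContDiff ℝ 1 ρ) (hw : ContDiff ℝ 1 w) :
    deriv (fun y ↦ (ρ y : ℂ) * w y) = fun y ↦ ((deriv ρ y : ℝ) : ℂ) * w y + ρ y * deriv w y :=
  funext fun y ↦ ((hρ.differentiable one_ne_zero y).hasDerivAt.ofReal_comp.mul
    (hw.differentiable one_ne_zero y).hasDerivAt).deriv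

theorem integral_deriv_mul_norm_sq_le (hρ : ContDiff ℝ 1 ρ)
    (hρ1 : ∀ y ∈ Icc (-1 : ℝ) 1, |ρ y| ≤ 1) (hw : ContDiff ℝ 1 w) (hleft : w (-1) = 0)
    (hright : w 1 = 0) :
    ∫ y in Icc (-1 : ℝ) 1, deriv ρ y * ‖w y‖ ^ 2 ≤ 2 * (nL2 w * nL2 (deriv w)) := by
  have hwc := hw.continuous
  have hw' := hw.continuous_deriv le_rfl
  have hρc := hρ.continuous
  have hρw : ContDiff ℝ 1 fun y ↦ (ρ y : ℂ) * w y := (contDiff_ofReal_comp hρ).mul hw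
  have hparts : ((∫ y in Icc (-1 : ℝ) 1, deriv ρ y * ‖w y‖ ^ 2 : ℝ) : ℂ)
      = -(innI (deriv w) (fun y ↦ (ρ y : ℂ) * w y) + innI w fun y ↦ (ρ y : ℂ) * deriv w y) := by
    rw [innI_deriv_left hw hρw (by simp [hleft]) (by simp [hright]), deriv_ofReal_mul hρ hw,
      innI_add_right hwc (by fun_prop) (by fun_prop), innI_ofReal_mul_right, innI_ofReal_mul_self]
    ring
  calc ∫ y in Icc (-1 : ℝ) 1, deriv ρ y * ‖w y‖ ^ 2
      ≤ ‖((∫ y in Icc (-1 : ℝ) 1, deriv ρ y * ‖w y‖ ^ 2 : ℝ) : ℂ)‖ := by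
        rw [Complex.norm_real]
        exact Real.le_norm_self _
    _ ≤ nL2 (deriv w) * nL2 (fun y ↦ (ρ y : ℂ) * w y)
          + nL2 w * nL2 (fun y ↦ (ρ y : ℂ) * deriv w y) := by
        rw [hparts, norm_neg]
        exact (norm_add_le _ _).trans
          (add_le_add (norm_innI_le hw' hρw.continuous)
            (norm_innI_le hwc (by fun_prop)))
    _ ≤ nL2 (deriv w) * (1 * nL2 w) + nL2 w * (1 * nL2 (deriv w)) := by
        gcongr
        · exact nL2_nonneg _
        · exact nL2_ofReal_mul_le hρc hwc hρ1
        · exact nL2_nonneg _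
        · exact nL2_ofReal_mul_le hρc hw' hρ1
    _ = 2 * (nL2 w * nL2 (deriv w)) := by ring

/-- Since `ρ` is real, the diffusion contributes only through its commutator with `ρ`. -/
theorem im_innI_resolventOp_ofReal_mul (hρ : ContDiff ℝ 1 ρ) (hw : ContDiff ℝ 2 w)
    (hleft : w (-1) = 0) (hright : w 1 = 0) :
    (innI (resolventOp ν k lam e w) fun y ↦ (ρ y : ℂ) * w y).im
      = ν * (innI (deriv w) fun y ↦ ((deriv ρ y : ℝ) : ℂ) * w y).im
        + k * ∫ y in Icc (-1 : ℝ) 1, (y - lam) * ρ y * ‖w y‖ ^ 2 := by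
  have hw1 : ContDiff ℝ 1 w := hw.of_le one_le_two
  have hw' := hw1.continuous_deriv le_rfl
  have hpair : innI (resolventOp ν k lam e w) (fun y ↦ (ρ y : ℂ) * w y)
      = ν * (innI (deriv w) (fun y ↦ ((deriv ρ y : ℝ) : ℂ) * w y)
          + (∫ y in Icc (-1 : ℝ) 1, ρ y * ‖deriv w y‖ ^ 2 : ℝ))
        + ((ν * k ^ 2 - e : ℝ) : ℂ) * (∫ y in Icc (-1 : ℝ) 1, ρ y * ‖w y‖ ^ 2 : ℝ)
        + Complex.I * k * (∫ y in Icc (-1 : ℝ) 1, (y - lam) * ρ y * ‖w y‖ ^ 2 : ℝ) := by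
    rw [innI_resolventOp hw ((contDiff_ofReal_comp hρ).mul hw1) (by simp [hleft])
        (by simp [hright]),
      deriv_ofReal_mul hρ hw1, innI_add_right hw' (by fun_prop) (by fun_prop),
      ← innI_ofReal_mul_self, ← innI_ofReal_mul_self, ← innI_ofReal_mul_self,
      ← innI_ofReal_mul_right, ← innI_ofReal_mul_right]
    simp only [innI, Complex.ofReal_mul, map_mul, Complex.conj_ofReal, mul_assoc, mul_left_comm]
  rw [hpair]
  simp [-Complex.ofReal_pow, -Complex.ofReal_mul, -Complex.ofReal_sub]

theorem HasResolventBound.abs_mul_integral_le (h : HasResolventBound ν k lam e M w) (hν : 0 ≤ ν)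
    (hρ : ContDiff ℝ 1 ρ) (hρ1 : ∀ y ∈ Icc (-1 : ℝ) 1, |ρ y| ≤ 1)
    (hB : ∀ y ∈ Icc (-1 : ℝ) 1, |deriv ρ y| ≤ B) :
    |k| * |∫ y in Icc (-1 : ℝ) 1, (y - lam) * ρ y * ‖w y‖ ^ 2|
      ≤ M * (nL2 w + (B * nL2 w + nL2 (deriv w))) + ν * (nL2 (deriv w) * (B * nL2 w)) := by
  have hwc := h.continuous
  have hw' := h.continuous_deriv
  have hρc := hρ.continuous
  have hρ' := hρ.continuous_deriv le_rfl
  have hM := h.bound_nonneg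
  have hρw : ContDiff ℝ 1 fun y ↦ (ρ y : ℂ) * w y :=
    (contDiff_ofReal_comp hρ).mul h.contDiff_one
  have hcomm : nL2 (fun y ↦ ((deriv ρ y : ℝ) : ℂ) * w y) ≤ B * nL2 w :=
    nL2_ofReal_mul_le hρ' hwc hB
  have hsource : ‖innI (resolventOp ν k lam e w) (fun y ↦ (ρ y : ℂ) * w y)‖
      ≤ M * (nL2 w + (B * nL2 w + nL2 (deriv w))) := by
    refine (h.norm_innI_resolventOp_le hρw (by simp [h.apply_neg_one])
      (by simp [h.apply_one])).trans ?_
    rw [deriv_ofReal_mul hρ h.contDiff_one]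
    gcongr
    · simpa using nL2_ofReal_mul_le hρc hwc hρ1
    · refine (nL2_add_le (by fun_prop) (by fun_prop)).trans (add_le_add hcomm ?_)
      simpa using nL2_ofReal_mul_le hρc hw' hρ1
  rw [← abs_mul, ← sub_eq_iff_eq_add'.2
    (im_innI_resolventOp_ofReal_mul hρ h.contDiff h.apply_neg_one h.apply_one)]
  refine (abs_sub _ _).trans (add_le_add ((Complex.abs_im_le_norm _).trans hsource) ?_)
  rw [abs_mul, abs_of_nonneg hν]
  gcongr
  exact ((Complex.abs_im_le_norm _).trans (norm_innI_le hw' (by fun_prop))).trans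
    (mul_le_mul_of_nonneg_left hcomm (nL2_nonneg _))

end Multiplier

section CriticalLayer

/-- A smooth substitute for `|x|`, of size `δ` in the critical layer `|x| ≤ δ`. -/
noncomputable def layerWeight (δ x : ℝ) : ℝ := √(δ ^ 2 + x ^ 2)

/-- A smooth substitute for the sign of `x`, with transition layer `|x| ≤ δ`: the multiplier that
makes the transport term coercive. -/
noncomputable def layerSign (δ x : ℝ) : ℝ := x / layerWeight δ x

variable {δ : ℝ}

theorem layerWeight_sq (δ x : ℝ) : layerWeight δ x ^ 2 = δ ^ 2 + x ^ 2 :=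
  Real.sq_sqrt (by positivity)

theorem le_layerWeight (δ x : ℝ) : δ ≤ layerWeight δ x :=
  Real.le_sqrt_of_sq_le (by nlinarith)

theorem abs_le_layerWeight (δ x : ℝ) : |x| ≤ layerWeight δ x :=
  Real.abs_le_sqrt (by nlinarith)

theorem layerWeight_pos (hδ : 0 < δ) (x : ℝ) : 0 < layerWeight δ x :=
  hδ.trans_le (le_layerWeight δ x)

@[fun_prop]
theorem continuous_layerWeight (δ : ℝ) : Continuous (layerWeight δ) := by
  unfold layerWeight
  fun_prop

theorem hasDerivAt_layerSign (hδ : 0 < δ) (x : ℝ) :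
    HasDerivAt (layerSign δ) (δ ^ 2 / layerWeight δ x ^ 3) x := by
  have hW := layerWeight_pos hδ x
  have hweight : HasDerivAt (layerWeight δ) (x / layerWeight δ x) x := by
    have hroot : HasDerivAt (layerWeight δ) _ x :=
      (((hasDerivAt_id x).pow 2).const_add (δ ^ 2)).sqrt (by
        simp only [Pi.pow_apply, id]
        positivity)
    refine hroot.congr_deriv ?_
    simp [layerWeight, mul_div_mul_left]
  refine ((hasDerivAt_id x).div hweight hW.ne').congr_deriv ?_
  simp only [id]
  field_simp
  linear_combination layerWeight_sq δ x

theorem contDiff_layerSign (hδ : 0 < δ) : ContDiff ℝ 1 (layerSign δ) := by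
  rw [contDiff_one_iff_deriv, show deriv (layerSign δ) = fun x ↦ δ ^ 2 / layerWeight δ x ^ 3 from
    funext fun x ↦ (hasDerivAt_layerSign hδ x).deriv]
  exact ⟨fun x ↦ (hasDerivAt_layerSign hδ x).differentiableAt, continuous_const.div (by fun_prop)
    fun x ↦ (pow_pos (layerWeight_pos hδ x) 3).ne'⟩

theorem abs_layerSign_le_one (δ x : ℝ) : |layerSign δ x| ≤ 1 := by
  rw [layerSign, abs_div, abs_of_nonneg (show 0 ≤ layerWeight δ x from Real.sqrt_nonneg _)]
  exact div_le_one_of_le₀ (abs_le_layerWeight δ x) (Real.sqrt_nonneg _)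

theorem abs_deriv_layerSign_le (hδ : 0 < δ) (x : ℝ) : |deriv (layerSign δ) x| ≤ δ⁻¹ := by
  have hW := layerWeight_pos hδ x
  rw [(hasDerivAt_layerSign hδ x).deriv, abs_of_pos (by positivity)]
  calc δ ^ 2 / layerWeight δ x ^ 3 ≤ δ ^ 2 / δ ^ 3 := by
        gcongr
        exact le_layerWeight δ x
    _ = δ⁻¹ := by field_simp

/-- The transport gain `x * layerSign δ x` misses the weight only inside the layer, where the
derivative of `layerSign` makes up for it. -/
theorem layerWeight_le (hδ : 0 < δ) (x : ℝ) :
    layerWeight δ x ≤ 2 * (x * layerSign δ x) + 2 * δ ^ 2 * deriv (layerSign δ) x := by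
  have hW := layerWeight_pos hδ x
  have hsq := layerWeight_sq δ x
  have hsum : 2 * (x * layerSign δ x) + 2 * δ ^ 2 * deriv (layerSign δ) x
      = (2 * x ^ 2 * layerWeight δ x ^ 2 + 2 * δ ^ 4) / layerWeight δ x ^ 3 := by
    rw [(hasDerivAt_layerSign hδ x).deriv, layerSign]
    field_simp
  rw [hsum, le_div_iff₀ (by positivity),
    show layerWeight δ x * layerWeight δ x ^ 3 = (layerWeight δ x ^ 2) ^ 2 by ring, hsq]
  nlinarith [sq_nonneg (x ^ 2), sq_nonneg (δ ^ 2)]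

variable {ν k lam e M : ℝ} {w : ℝ → ℂ}

theorem HasResolventBound.weighted_le (h : HasResolventBound ν k lam e M w) (hν : 0 ≤ ν)
    (hδ : 0 < δ) :
    |k| * ∫ y in Icc (-1 : ℝ) 1, layerWeight δ (y - lam) * ‖w y‖ ^ 2
      ≤ 2 * (M * (nL2 w + (δ⁻¹ * nL2 w + nL2 (deriv w)))
          + ν * (nL2 (deriv w) * (δ⁻¹ * nL2 w)))
        + 4 * |k| * δ ^ 2 * (nL2 w * nL2 (deriv w)) := by
  set ρ : ℝ → ℝ := fun y ↦ layerSign δ (y - lam)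
  have hρ : ContDiff ℝ 1 ρ := (contDiff_layerSign hδ).comp (contDiff_id.sub contDiff_const)
  have hρ' (y : ℝ) : deriv ρ y = deriv (layerSign δ) (y - lam) :=
    deriv_comp_sub_const (layerSign δ) lam y
  have hρ1 : ∀ y ∈ Icc (-1 : ℝ) 1, |ρ y| ≤ 1 := fun y _ ↦ abs_layerSign_le_one δ _
  have hwc := h.continuous
  have hderiv := integral_deriv_mul_norm_sq_le hρ hρ1 h.contDiff_one h.apply_neg_one h.apply_one
  have htransport := h.abs_mul_integral_le hν hρ hρ1 (B := δ⁻¹) fun y _ ↦ by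
    rw [hρ']
    exact abs_deriv_layerSign_le hδ _
  have hpointwise : ∫ y in Icc (-1 : ℝ) 1, layerWeight δ (y - lam) * ‖w y‖ ^ 2
      ≤ 2 * (∫ y in Icc (-1 : ℝ) 1, (y - lam) * ρ y * ‖w y‖ ^ 2)
        + 2 * δ ^ 2 * ∫ y in Icc (-1 : ℝ) 1, deriv ρ y * ‖w y‖ ^ 2 := by
    rw [← integral_const_mul, ← integral_const_mul, ← integral_add
      (Continuous.integrableOn_Icc (by fun_prop)) (Continuous.integrableOn_Icc (by fun_prop))]
    refine setIntegral_mono_on (Continuous.integrableOn_Icc (by fun_prop))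
      (Continuous.integrableOn_Icc (by fun_prop)) measurableSet_Icc fun y _ ↦ ?_
    rw [hρ']
    nlinarith [layerWeight_le hδ (y - lam), sq_nonneg ‖w y‖]
  calc _ ≤ |k| * (2 * |∫ y in Icc (-1 : ℝ) 1, (y - lam) * ρ y * ‖w y‖ ^ 2|
          + 2 * δ ^ 2 * (2 * (nL2 w * nL2 (deriv w)))) := by
        refine mul_le_mul_of_nonneg_left (hpointwise.trans ?_) (abs_nonneg k)
        gcongr
        exact le_abs_self _
    _ ≤ _ := by linarith

namespace HasResolventBound

variable {k lam ε M δ : ℝ} {w : ℝ → ℂ}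

theorem nL2_deriv_le_of_energy (h : HasResolventBound (|k| * δ ^ 3) k lam (ε * (|k| * δ)) M w)
    (hδ : 0 < δ) (hk : 1 ≤ |k|) (hε : ε ≤ 1 / 144) :
    |k| * nL2 (deriv w) * δ ^ 3 ≤ M + |k| * nL2 w * δ ^ 2 / 12 := by
  have hw := nL2_nonneg w
  set A := |k| * nL2 w * δ ^ 2 with hA
  set N := |k| * δ ^ 3 * √(nL2 w ^ 2 + nL2 (deriv w) ^ 2) with hN
  have hM := h.bound_nonneg
  have hA0 : 0 ≤ A := by positivity
  have hNsq : N ^ 2 = (|k| * δ ^ 3) ^ 2 * (nL2 w ^ 2 + nL2 (deriv w) ^ 2) := by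
    rw [hN, mul_pow, Real.sq_sqrt (by positivity)]
  have hquad : N ^ 2 ≤ M * N + A ^ 2 / 144 := by
    calc N ^ 2
        ≤ (|k| * δ ^ 3) ^ 2 * (|k| ^ 2 * nL2 w ^ 2 + nL2 (deriv w) ^ 2) := by
          rw [hNsq]
          gcongr
          exact le_mul_of_one_le_left (by positivity) (one_le_pow₀ hk)
      _ = |k| * δ ^ 3 * (|k| * δ ^ 3 * nL2 (deriv w) ^ 2
            + (|k| * δ ^ 3 * k ^ 2 - ε * (|k| * δ)) * nL2 w ^ 2) + ε * A ^ 2 := by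
          rw [hA, ← sq_abs k]
          ring
      _ ≤ |k| * δ ^ 3 * (M * √(nL2 w ^ 2 + nL2 (deriv w) ^ 2)) + 1 / 144 * A ^ 2 := by
          gcongr
          exact h.energy_le
      _ = M * N + A ^ 2 / 144 := by ring
  calc |k| * nL2 (deriv w) * δ ^ 3 ≤ N := by
        rw [hN, mul_right_comm]
        gcongr
        exact Real.le_sqrt_of_sq_le (le_add_of_nonneg_left (sq_nonneg _))
    _ ≤ M + A / 12 := by
        by_contra! hlarge
        nlinarith

theorem weighted_le_of_scaling (h : HasResolventBound (|k| * δ ^ 3) k lam (ε * (|k| * δ)) M w)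
    (hδ : 0 < δ) (hδ1 : δ ≤ 1) :
    |k| ^ 2 * (∫ y in Icc (-1 : ℝ) 1, layerWeight δ (y - lam) * ‖w y‖ ^ 2) * δ ^ 3
      ≤ 2 * M * (|k| * nL2 (deriv w) * δ ^ 3) + 4 * M * (|k| * nL2 w * δ ^ 2)
        + 6 * (|k| * nL2 w * δ ^ 2) * (|k| * nL2 (deriv w) * δ ^ 3) := by
  have hw := nL2_nonneg w
  have hM := h.bound_nonneg
  calc _ = |k| * δ ^ 3
          * (|k| * ∫ y in Icc (-1 : ℝ) 1, layerWeight δ (y - lam) * ‖w y‖ ^ 2) := by ring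
    _ ≤ |k| * δ ^ 3 * (2 * (M * (nL2 w + (δ⁻¹ * nL2 w + nL2 (deriv w)))
          + |k| * δ ^ 3 * (nL2 (deriv w) * (δ⁻¹ * nL2 w)))
          + 4 * |k| * δ ^ 2 * (nL2 w * nL2 (deriv w))) := by
        gcongr
        exact h.weighted_le (by positivity) hδ
    _ = 2 * M * (|k| * nL2 (deriv w) * δ ^ 3) + 2 * M * (|k| * nL2 w * δ ^ 2) * (1 + δ)
        + 6 * (|k| * nL2 w * δ ^ 2) * (|k| * nL2 (deriv w) * δ ^ 3) := by
        field_simp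
        ring
    _ ≤ _ := by
        have : 0 ≤ M * (|k| * nL2 w * δ ^ 2) * (1 - δ) :=
          mul_nonneg (by positivity) (sub_nonneg.2 hδ1)
        linarith

theorem mul_nL2_le (h : HasResolventBound (|k| * δ ^ 3) k lam (ε * (|k| * δ)) M w)
    (hδ : 0 < δ) (hδ1 : δ ≤ 1) (hk : 1 ≤ |k|) (hε : ε ≤ 1 / 144) :
    |k| * nL2 w * δ ^ 2 ≤ 21 * M := by
  have hw := nL2_nonneg w
  have hM := h.bound_nonneg
  have hwc := h.continuous
  have hdom : δ * nL2 w ^ 2 ≤ ∫ y in Icc (-1 : ℝ) 1, layerWeight δ (y - lam) * ‖w y‖ ^ 2 := by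
    rw [nL2_sq, ← integral_const_mul]
    refine setIntegral_mono_on (Continuous.integrableOn_Icc (by fun_prop))
      (Continuous.integrableOn_Icc (by fun_prop)) measurableSet_Icc fun y _ ↦ ?_
    gcongr
    exact le_layerWeight δ _
  have henergy := h.nL2_deriv_le_of_energy hδ hk hε
  have hweighted := h.weighted_le_of_scaling hδ hδ1
  have hsq : (|k| * nL2 w * δ ^ 2) ^ 2
      ≤ |k| ^ 2 * (∫ y in Icc (-1 : ℝ) 1, layerWeight δ (y - lam) * ‖w y‖ ^ 2) * δ ^ 3 := by
    calc (|k| * nL2 w * δ ^ 2) ^ 2 = |k| ^ 2 * (δ * nL2 w ^ 2) * δ ^ 3 := by ring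
      _ ≤ _ := by gcongr
  have hA0 : 0 ≤ |k| * nL2 w * δ ^ 2 := by positivity
  set A := |k| * nL2 w * δ ^ 2
  have hquad : A ^ 2 ≤ 2 * M * (M + A / 12) + 4 * M * A + 6 * A * (M + A / 12) := by
    refine (hsq.trans hweighted).trans ?_
    gcongr
  by_contra! hlarge
  nlinarith

theorem mul_nL2_deriv_le (h : HasResolventBound (|k| * δ ^ 3) k lam (ε * (|k| * δ)) M w)
    (hδ : 0 < δ) (hδ1 : δ ≤ 1) (hk : 1 ≤ |k|) (hε : ε ≤ 1 / 144) :
    |k| * nL2 (deriv w) * δ ^ 3 ≤ 3 * M := by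
  linarith [h.nL2_deriv_le_of_energy hδ hk hε, h.mul_nL2_le hδ hδ1 hk hε, h.bound_nonneg]

theorem mul_nL2_sqrt_layerWeight_mul_le
    (h : HasResolventBound (|k| * δ ^ 3) k lam (ε * (|k| * δ)) M w)
    (hδ : 0 < δ) (hδ1 : δ ≤ 1) (hk : 1 ≤ |k|) (hε : ε ≤ 1 / 144) :
    |k| * nL2 (fun y ↦ ((√(layerWeight δ (y - lam)) : ℝ) : ℂ) * w y) ≤ 23 * M / (δ * √δ) := by
  have hM := h.bound_nonneg
  have hw' := nL2_nonneg (deriv w)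
  have hA := h.mul_nL2_le hδ hδ1 hk hε
  have hB := h.mul_nL2_deriv_le hδ hδ1 hk hε
  rw [le_div_iff₀ (by positivity)]
  refine le_of_sq_le_sq ?_ (by positivity)
  calc _ = |k| ^ 2
          * (∫ y in Icc (-1 : ℝ) 1, layerWeight δ (y - lam) * ‖w y‖ ^ 2) * δ ^ 3 := by
        rw [mul_pow, mul_pow, mul_pow, Real.sq_sqrt hδ.le, nL2_sq]
        simp only [norm_mul, mul_pow, Complex.norm_real, Real.norm_eq_abs, sq_abs,
          Real.sq_sqrt (layerWeight_pos hδ _).le]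
        ring
    _ ≤ _ := h.weighted_le_of_scaling hδ hδ1
    _ ≤ 2 * M * (3 * M) + 4 * M * (21 * M) + 6 * (21 * M) * (3 * M) := by gcongr
    _ ≤ (23 * M) ^ 2 := by nlinarith [sq_nonneg M]

end HasResolventBound

end CriticalLayer

section Cutoff

/-- The `C¹` regularisation of `x⁻¹` at scale `δ`; its translate by `λ` is the function `χ` of the
resolvent estimate. -/
noncomputable def regularizedInv (δ x : ℝ) : ℝ :=
  if δ ≤ |x| then x⁻¹ else 2 * x / δ ^ 2 - x ^ 3 / δ ^ 4

variable {δ x : ℝ}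

theorem contDiff_ite_two_sub_inv : ContDiff ℝ 1 fun u : ℝ ↦ if u ≤ 1 then 2 - u else u⁻¹ := by
  have hmax (u : ℝ) : max u 1 ≠ 0 := (zero_lt_one.trans_le (le_max_right u 1)).ne'
  have hcont : Continuous fun u : ℝ ↦ if u ≤ 1 then 2 - u else u⁻¹ := by
    have heq : (fun u : ℝ ↦ if u ≤ 1 then 2 - u else u⁻¹)
        = fun u ↦ if u ≤ 1 then 2 - u else (max u 1)⁻¹ := by
      ext u
      split_ifs with hu
      · rfl
      · rw [max_eq_left (not_le.1 hu).le]
    rw [heq]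
    exact Continuous.if_le (by fun_prop) (Continuous.inv₀ (by fun_prop) hmax) continuous_id
      continuous_const fun u hu ↦ by norm_num [hu]
  refine contDiff_one_of_hasDerivAt_ne (a := 1) (f' := fun u ↦ -(max u 1 ^ 2)⁻¹) (fun u hu ↦ ?_)
    hcont.continuousAt (Continuous.inv₀ (by fun_prop) fun u ↦ pow_ne_zero 2 (hmax u)).neg
  rcases hu.lt_or_gt with hlt | hgt
  · rw [max_eq_right hlt.le]
    refine HasDerivAt.congr_of_eventuallyEq (f := fun v ↦ 2 - v) ?_
      ((eventually_lt_nhds hlt).mono fun v hv ↦ if_pos hv.le)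
    simpa using (hasDerivAt_id u).const_sub 2
  · rw [max_eq_left hgt.le]
    exact (hasDerivAt_inv (zero_lt_one.trans hgt).ne').congr_of_eventuallyEq
      ((eventually_gt_nhds hgt).mono fun v hv ↦ if_neg (not_le.2 hv))

/-- `regularizedInv δ` is odd, hence `x` times a function of `(x / δ)²`: only one matching point is
left to check. -/
theorem contDiff_regularizedInv (hδ : 0 < δ) : ContDiff ℝ 1 (regularizedInv δ) := by
  have hfactor : regularizedInv δ = fun x ↦ x / δ ^ 2 *
      (fun u : ℝ ↦ if u ≤ 1 then 2 - u else u⁻¹) ((x / δ) ^ 2) := by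
    ext x
    have hiff : (x / δ) ^ 2 ≤ 1 ↔ |x| ≤ δ := by
      rw [sq_le_one_iff_abs_le_one, abs_div, abs_of_pos hδ, div_le_one hδ]
    simp only [regularizedInv, hiff]
    rcases lt_trichotomy |x| δ with h | h | h
    · rw [if_neg h.not_ge, if_pos h.le]
      field_simp
    · rw [if_pos h.ge, if_pos h.le]
      have hx : x ≠ 0 := abs_pos.1 (h ▸ hδ)
      have hsq : x ^ 2 = δ ^ 2 := by rw [← h, sq_abs]
      field_simp
      rw [hsq]
      ring
    · rw [if_pos h.le, if_neg h.not_ge]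
      have hx : x ≠ 0 := abs_pos.1 (hδ.trans h)
      field_simp
  rw [hfactor]
  exact ContDiff.mul (by fun_prop) (contDiff_ite_two_sub_inv.comp (by fun_prop))

theorem one_sub_mul_regularizedInv_of_le (hδ : 0 < δ) (hx : δ ≤ |x|) :
    1 - x * regularizedInv δ x = 0 := by
  rw [regularizedInv, if_pos hx, mul_inv_cancel₀ (abs_pos.1 (hδ.trans_le hx)), sub_self]

theorem one_sub_mul_regularizedInv_of_lt (hδ : 0 < δ) (hx : |x| < δ) :
    1 - x * regularizedInv δ x = (1 - (x / δ) ^ 2) ^ 2 := by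
  rw [regularizedInv, if_neg hx.not_ge]
  field_simp
  ring

theorem abs_one_sub_mul_regularizedInv_le_one (hδ : 0 < δ) (x : ℝ) :
    |1 - x * regularizedInv δ x| ≤ 1 := by
  rcases le_or_gt δ |x| with h | h
  · simp [one_sub_mul_regularizedInv_of_le hδ h]
  · have hsq : (x / δ) ^ 2 ≤ 1 := by
      rw [sq_le_one_iff_abs_le_one, abs_div, abs_of_pos hδ]
      exact div_le_one_of_le₀ h.le hδ.le
    rw [one_sub_mul_regularizedInv_of_lt hδ h, abs_of_nonneg (sq_nonneg _)]
    exact pow_le_one₀ (sub_nonneg.2 hsq) (sub_le_self _ (sq_nonneg _))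

theorem abs_regularizedInv_le (hδ : 0 < δ) (x : ℝ) :
    |regularizedInv δ x| ≤ 4 / (|x| + δ) := by
  rw [regularizedInv]
  split_ifs with h
  · rw [abs_inv, inv_eq_one_div, div_le_div_iff₀ (hδ.trans_le h) (by positivity)]
    linarith
  · have hx : |x / δ| ≤ 1 := by
      rw [abs_div, abs_of_pos hδ]
      exact div_le_one_of_le₀ (not_le.1 h).le hδ.le
    have hfactor : |2 - (x / δ) ^ 2| ≤ 2 := by
      have := (sq_le_one_iff_abs_le_one _).2 hx
      exact abs_le.2 ⟨by linarith, by linarith [sq_nonneg (x / δ)]⟩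
    calc |2 * x / δ ^ 2 - x ^ 3 / δ ^ 4| = |x / δ| * |2 - (x / δ) ^ 2| / δ := by
          rw [← abs_mul, ← abs_of_pos hδ, ← abs_div, abs_of_pos hδ]
          congr 1
          field_simp
      _ ≤ 1 * 2 / δ := by gcongr
      _ = 4 / (δ + δ) := by
          field_simp
          norm_num
      _ ≤ 4 / (|x| + δ) := by
          gcongr
          exact (not_le.1 h).le

end Cutoff

section BoundaryBump

/-- The boundary corrector at the endpoint `j = ±1`: it equals `1` at `j` and is supported, within
`[-1,1]`, in the layer `|y - j| ≤ r ^ 2`, since there `1 - j * y = |y - j|`. -/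
noncomputable def boundaryBump (j r y : ℝ) : ℝ := max (1 - (1 - j * y) / r ^ 2) 0 ^ 2

variable {j r y : ℝ}

theorem hasDerivAt_max_zero_sq (x : ℝ) :
    HasDerivAt (fun x : ℝ ↦ max x 0 ^ 2) (2 * max x 0) x := by
  refine hasDerivAt_of_hasDerivAt_of_ne' (f := fun x : ℝ ↦ max x 0 ^ 2)
    (g := fun x ↦ 2 * max x 0) (fun u hu ↦ ?_) (by fun_prop) (by fun_prop) x (x := 0)
  rcases hu.lt_or_gt with hlt | hgt
  · rw [max_eq_right hlt.le, mul_zero]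
    exact (hasDerivAt_const u 0).congr_of_eventuallyEq
      ((eventually_lt_nhds hlt).mono fun v hv ↦ by simp [max_eq_right hv.le])
  · rw [max_eq_left hgt.le]
    refine HasDerivAt.congr_of_eventuallyEq (f := fun v ↦ v ^ 2) (by simpa using hasDerivAt_pow 2 u)
      ((eventually_gt_nhds hgt).mono fun v hv ↦ by simp [max_eq_left (le_of_lt hv)])

theorem hasDerivAt_boundaryBump (j r y : ℝ) :
    HasDerivAt (boundaryBump j r) (2 * max (1 - (1 - j * y) / r ^ 2) 0 * (j / r ^ 2)) y := by
  have hinner : HasDerivAt (fun y ↦ 1 - (1 - j * y) / r ^ 2) (j / r ^ 2) y := by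
    simpa [neg_div] using
      ((((hasDerivAt_id y).const_mul j).const_sub 1).div_const (r ^ 2)).const_sub 1
  exact (hasDerivAt_max_zero_sq _).comp y hinner

theorem deriv_boundaryBump (j r : ℝ) :
    deriv (boundaryBump j r) = fun y ↦ 2 * max (1 - (1 - j * y) / r ^ 2) 0 * (j / r ^ 2) :=
  funext fun y ↦ (hasDerivAt_boundaryBump j r y).deriv

theorem contDiff_boundaryBump (j r : ℝ) : ContDiff ℝ 1 (boundaryBump j r) := by
  rw [contDiff_one_iff_deriv, deriv_boundaryBump]
  exact ⟨fun y ↦ (hasDerivAt_boundaryBump j r y).differentiableAt, by fun_prop⟩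

theorem boundaryBump_self (hj : j = 1 ∨ j = -1) (r : ℝ) : boundaryBump j r j = 1 := by
  rcases hj with rfl | rfl <;> simp [boundaryBump]

theorem boundaryBump_neg (hj : j = 1 ∨ j = -1) (hr : 0 < r) (hr1 : r ≤ 1) :
    boundaryBump j r (-j) = 0 := by
  have hjj : j * -j = -1 := by rcases hj with rfl | rfl <;> norm_num
  have hle : 1 - 2 / r ^ 2 ≤ 0 := by
    rw [sub_nonpos, one_le_div (by positivity)]
    nlinarith
  rw [boundaryBump, hjj, sub_neg_eq_add, one_add_one_eq_two, max_eq_right hle, zero_pow two_ne_zero]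

theorem one_sub_mul_eq_abs_sub (hj : j = 1 ∨ j = -1) (hy : y ∈ Icc (-1 : ℝ) 1) :
    1 - j * y = |y - j| := by
  rcases hj with rfl | rfl
  · rw [abs_of_nonpos (by linarith [hy.2])]
    ring
  · rw [abs_of_nonneg (by linarith [hy.1])]
    ring

theorem max_one_sub_div_le_one (hj : j = 1 ∨ j = -1) (r : ℝ) (hy : y ∈ Icc (-1 : ℝ) 1) :
    max (1 - (1 - j * y) / r ^ 2) 0 ≤ 1 := by
  rw [one_sub_mul_eq_abs_sub hj hy]
  exact max_le (sub_le_self _ (by positivity)) zero_le_one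

theorem max_one_sub_div_eq_zero (hj : j = 1 ∨ j = -1) (hr : 0 < r) (hy : y ∈ Icc (-1 : ℝ) 1)
    (hfar : r ^ 2 < |y - j|) : max (1 - (1 - j * y) / r ^ 2) 0 = 0 := by
  rw [one_sub_mul_eq_abs_sub hj hy]
  exact max_eq_right (sub_nonpos.2 ((one_le_div (by positivity)).2 hfar.le))

theorem boundaryBump_eq_zero (hj : j = 1 ∨ j = -1) (hr : 0 < r) (hy : y ∈ Icc (-1 : ℝ) 1)
    (hfar : r ^ 2 < |y - j|) : boundaryBump j r y = 0 := by
  rw [boundaryBump, max_one_sub_div_eq_zero hj hr hy hfar, zero_pow two_ne_zero]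

theorem nL2_boundaryBump_le (hj : j = 1 ∨ j = -1) (hr : 0 < r) :
    nL2 (fun y ↦ (boundaryBump j r y : ℂ)) ≤ 2 * r := by
  refine le_of_sq_le_sq ((nL2_sq_le_of_support (B := 1) (c := j) (sq_nonneg r) (fun y hy ↦ ?_)
    fun y hy hfar ↦ ?_).trans (by nlinarith)) (by positivity)
  · rw [Complex.norm_real, boundaryBump, norm_pow, Real.norm_of_nonneg (le_max_right _ _)]
    exact pow_le_one₀ (le_max_right _ _) (max_one_sub_div_le_one hj r hy)
  · rw [boundaryBump_eq_zero hj hr hy hfar, Complex.ofReal_zero]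

theorem nL2_deriv_boundaryBump_le (hj : j = 1 ∨ j = -1) (hr : 0 < r) :
    nL2 (deriv fun y ↦ (boundaryBump j r y : ℂ)) ≤ 3 / r := by
  have hderiv : (deriv fun y ↦ (boundaryBump j r y : ℂ))
      = fun y ↦ ((2 * max (1 - (1 - j * y) / r ^ 2) 0 * (j / r ^ 2) : ℝ) : ℂ) :=
    funext fun y ↦ (hasDerivAt_boundaryBump j r y).ofReal_comp.deriv
  rw [hderiv]
  refine le_of_sq_le_sq ((nL2_sq_le_of_support (B := 2 * 1 * (1 / r ^ 2)) (c := j) (sq_nonneg r)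
    (fun y hy ↦ ?_) fun y hy hfar ↦ ?_).trans ?_) (by positivity)
  · have hj1 : |j| = 1 := by rcases hj with rfl | rfl <;> simp
    rw [Complex.norm_real, norm_mul, norm_mul, norm_div, Real.norm_of_nonneg (le_max_right _ _),
      Real.norm_of_nonneg (sq_nonneg r), Real.norm_eq_abs j, hj1, Real.norm_two]
    gcongr
    exact max_one_sub_div_le_one hj r hy
  · rw [max_one_sub_div_eq_zero hj hr hy hfar]
    simp
  · rw [div_pow, le_div_iff₀ (by positivity)]
    field_simp
    norm_num

/-- The function `g`, corrected in a layer of width `r ^ 2` so as to vanish at the endpoint `j`. -/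
noncomputable def boundaryCorrected (j r : ℝ) (g : ℝ → ℂ) (y : ℝ) : ℂ :=
  g y - g j * (boundaryBump j r y : ℂ)

variable {g : ℝ → ℂ}

theorem contDiff_boundaryCorrected (j r : ℝ) (hg : ContDiff ℝ 1 g) :
    ContDiff ℝ 1 (boundaryCorrected j r g) :=
  hg.sub (contDiff_const.mul (contDiff_ofReal_comp (contDiff_boundaryBump j r)))

theorem boundaryCorrected_neg_one_and_one (hj : j = 1 ∨ j = -1) (hr : 0 < r) (hr1 : r ≤ 1)
    (hg : g (-j) = 0) : boundaryCorrected j r g (-1) = 0 ∧ boundaryCorrected j r g 1 = 0 := by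
  have hself : boundaryCorrected j r g j = 0 := by
    simp [boundaryCorrected, boundaryBump_self hj]
  have hneg : boundaryCorrected j r g (-j) = 0 := by
    simp [boundaryCorrected, boundaryBump_neg hj hr hr1, hg]
  rcases hj with rfl | rfl
  · exact ⟨hneg, hself⟩
  · exact ⟨hself, by rwa [neg_neg] at hneg⟩

theorem nL2_boundaryCorrected_le (hj : j = 1 ∨ j = -1) (hr : 0 < r) (hg : Continuous g) :
    nL2 (boundaryCorrected j r g) ≤ nL2 g + ‖g j‖ * (2 * r) :=
  (nL2_sub_const_mul_le hg (contDiff_ofReal_comp (contDiff_boundaryBump j r)).continuous _).trans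
    (by gcongr; exact nL2_boundaryBump_le hj hr)

theorem nL2_deriv_boundaryCorrected_le (hj : j = 1 ∨ j = -1) (hr : 0 < r)
    (hg : ContDiff ℝ 1 g) :
    nL2 (deriv (boundaryCorrected j r g)) ≤ nL2 (deriv g) + ‖g j‖ * (3 / r) := by
  have hη : ContDiff ℝ 1 fun y ↦ (boundaryBump j r y : ℂ) :=
    contDiff_ofReal_comp (contDiff_boundaryBump j r)
  have hderiv : deriv (boundaryCorrected j r g)
      = fun y ↦ deriv g y - g j * deriv (fun y ↦ (boundaryBump j r y : ℂ)) y := funext fun y ↦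
    ((hg.differentiable one_ne_zero y).hasDerivAt.sub
      ((hη.differentiable one_ne_zero y).hasDerivAt.const_mul (g j))).deriv
  rw [hderiv]
  exact (nL2_sub_const_mul_le (hg.continuous_deriv le_rfl) (hη.continuous_deriv le_rfl) _).trans
    (by gcongr; exact nL2_deriv_boundaryBump_le hj hr)

end BoundaryBump

section LayerWidth

/-- The square root of the width of the boundary layer in which the test function is corrected at
an endpoint at distance `D - δ` from the critical point `λ`. It balances the cost of the derivative
of the corrector against the cost of the transport term, see `layerWidth_sq_mul_sqrt`. -/
noncomputable def layerWidth (δ D : ℝ) : ℝ := δ ^ ((3 : ℝ) / 4) * D ^ (-(1 : ℝ) / 4)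

variable {δ D : ℝ}

theorem layerWidth_pos (hδ : 0 < δ) (hD : 0 < D) : 0 < layerWidth δ D := by
  unfold layerWidth
  positivity

theorem layerWidth_sq_mul_sqrt (hδ : 0 < δ) (hD : 0 < D) :
    layerWidth δ D ^ 2 * √D = δ * √δ := by
  rw [layerWidth, mul_pow, ← Real.rpow_mul_natCast hδ.le, ← Real.rpow_mul_natCast hD.le,
    Real.sqrt_eq_rpow, Real.sqrt_eq_rpow, mul_assoc, ← Real.rpow_add hD,
    ← Real.rpow_one_add' hδ.le (by norm_num)]
  norm_num

theorem layerWidth_sq_le (hδ : 0 < δ) (hδD : δ ≤ D) : layerWidth δ D ^ 2 ≤ δ := by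
  have hD := hδ.trans_le hδD
  refine le_of_mul_le_mul_right ?_ (Real.sqrt_pos.2 hD)
  rw [layerWidth_sq_mul_sqrt hδ hD]
  gcongr

theorem inv_layerWidth_mul (hδ : 0 < δ) (hD : 0 < D) :
    (layerWidth δ D * D)⁻¹ = D ^ (-(3 : ℝ) / 4) * δ ^ (-(3 : ℝ) / 4) := by
  rw [layerWidth, mul_assoc, ← Real.rpow_add_one hD.ne', mul_inv, ← Real.rpow_neg hδ.le,
    ← Real.rpow_neg hD.le, mul_comm]
  norm_num

end LayerWidth

section Pairing

theorem innI_eq_innI_add_innI_mul {χ : ℝ → ℝ} {w f : ℝ → ℂ} (hχ : Continuous χ)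
    (hw : Continuous w) (hf : Continuous f) (lam : ℝ) :
    innI w f = innI w (fun y ↦ ((1 - (y - lam) * χ y : ℝ) : ℂ) * f y)
      + innI (fun y ↦ ((y - lam : ℝ) : ℂ) * w y) (fun y ↦ f y * (χ y : ℂ)) := by
  rw [← innI_ofReal_mul_right, ← innI_add_right hw (by fun_prop) (by fun_prop)]
  congr 1
  ext y
  push_cast
  ring

theorem innI_eq_innI_boundaryCorrected_add {u g : ℝ → ℂ} (hu : Continuous u) (hg : Continuous g)
    (j r : ℝ) :
    innI u g = innI u (boundaryCorrected j r g)
      + innI u fun y ↦ g j * (boundaryBump j r y : ℂ) := by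
  have hη := (contDiff_ofReal_comp (contDiff_boundaryBump j r)).continuous
  have hsum := innI_add_right (f := boundaryCorrected j r g) (g := fun y ↦ g j * boundaryBump j r y)
    hu (hg.sub (continuous_const.mul hη)) (continuous_const.mul hη)
  simpa only [boundaryCorrected, sub_add_cancel] using hsum

theorem abs_regularizedInv_div_layerWidth_le {δ : ℝ} (hδ : 0 < δ) (x : ℝ) :
    |regularizedInv δ x| / layerWidth δ (|x| + δ)
      ≤ 4 * ((|x| + δ) ^ (-(3 : ℝ) / 4) * δ ^ (-(3 : ℝ) / 4)) := by
  have hD : 0 < |x| + δ := by positivity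
  have hr := layerWidth_pos hδ hD
  calc _ ≤ 4 / (|x| + δ) / layerWidth δ (|x| + δ) := by
        gcongr
        exact abs_regularizedInv_le hδ x
    _ = 4 * (layerWidth δ (|x| + δ) * (|x| + δ))⁻¹ := by field_simp
    _ = _ := by rw [inv_layerWidth_mul hδ hD]

theorem nL2_one_sub_mul_regularizedInv_le {δ : ℝ} (hδ : 0 < δ) (lam : ℝ) :
    nL2 (fun y ↦ ((1 - (y - lam) * regularizedInv δ (y - lam) : ℝ) : ℂ)) ≤ 2 * √δ := by
  refine le_of_sq_le_sq ((nL2_sq_le_of_support (B := 1) (c := lam) hδ.le (fun y _ ↦ ?_)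
    fun y _ hfar ↦ ?_).trans ?_) (by positivity)
  · rw [Complex.norm_real, Real.norm_eq_abs]
    exact abs_one_sub_mul_regularizedInv_le_one hδ _
  · rw [one_sub_mul_regularizedInv_of_le hδ hfar.le, Complex.ofReal_zero]
  · rw [mul_pow, Real.sq_sqrt hδ.le]
    linarith

namespace HasResolventBound

variable {k lam ε M δ : ℝ} {w f g : ℝ → ℂ}

theorem abs_mul_norm_innI_one_sub_mul_le
    (h : HasResolventBound (|k| * δ ^ 3) k lam (ε * (|k| * δ)) M w) (hδ : 0 < δ) (hδ1 : δ ≤ 1)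
    (hk : 1 ≤ |k|) (hε : ε ≤ 1 / 144) {S : ℝ} (hS : 0 ≤ S)
    (hf : ∀ y ∈ Ioo (-1 : ℝ) 1 ∩ Ioo (lam - δ) (lam + δ), ‖f y‖ ≤ S) :
    |k| * ‖innI w fun y ↦ ((1 - (y - lam) * regularizedInv δ (y - lam) : ℝ) : ℂ) * f y‖
      ≤ 42 * M * S * (√δ / δ ^ 2) := by
  have hχ : Continuous fun y ↦ regularizedInv δ (y - lam) :=
    (contDiff_regularizedInv hδ).continuous.comp (by fun_prop)
  set θ : ℝ → ℝ := fun y ↦ 1 - (y - lam) * regularizedInv δ (y - lam)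
  have hpointwise : ∀ y ∈ Ioo (-1 : ℝ) 1,
      ‖w y‖ * ‖(θ y : ℂ) * f y‖ ≤ S * (‖w y‖ * ‖(θ y : ℂ)‖) := by
    intro y hy
    rcases le_or_gt δ |y - lam| with hfar | hnear
    · simp [θ, one_sub_mul_regularizedInv_of_le hδ hfar]
    · have := hf y ⟨hy, by constructor <;> linarith [abs_lt.1 hnear]⟩
      calc ‖w y‖ * ‖(θ y : ℂ) * f y‖ = ‖f y‖ * (‖w y‖ * ‖(θ y : ℂ)‖) := by
            rw [norm_mul]
            ring
        _ ≤ _ := by gcongr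
  have hw := nL2_nonneg w
  calc |k| * ‖innI w fun y ↦ (θ y : ℂ) * f y‖
      ≤ |k| * (S * (nL2 w * (2 * √δ))) := by
        gcongr
        refine (norm_innI_le_of_norm_mul_norm_le h.continuous (by fun_prop) hS hpointwise).trans ?_
        gcongr
        exact nL2_one_sub_mul_regularizedInv_le hδ lam
    _ = 2 * (|k| * nL2 w * δ ^ 2) * S * (√δ / δ ^ 2) := by field_simp
    _ ≤ 2 * (21 * M) * S * (√δ / δ ^ 2) := by
        gcongr 2 * ?_ * S * (√δ / δ ^ 2)
        exact h.mul_nL2_le hδ hδ1 hk hε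
    _ = _ := by ring

theorem norm_diffusion_innI_le
    (h : HasResolventBound (|k| * δ ^ 3) k lam (ε * (|k| * δ)) M w) (hδ : 0 < δ) (hδ1 : δ ≤ 1)
    (hk : 1 ≤ |k|) (hε : ε ≤ 1 / 144) (hg : Continuous g) :
    ‖((|k| * δ ^ 3 : ℝ) : ℂ) * innI (deriv w) g‖ ≤ 3 * M * nL2 g := by
  have hgn := nL2_nonneg g
  calc _ ≤ |k| * δ ^ 3 * (nL2 (deriv w) * nL2 g) := by
        rw [norm_mul, Complex.norm_real, Real.norm_of_nonneg (by positivity)]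
        gcongr
        exact norm_innI_le h.continuous_deriv hg
    _ = |k| * nL2 (deriv w) * δ ^ 3 * nL2 g := by ring
    _ ≤ 3 * M * nL2 g := by
        gcongr ?_ * nL2 g
        exact h.mul_nL2_deriv_le hδ hδ1 hk hε

theorem norm_reaction_innI_le
    (h : HasResolventBound (|k| * δ ^ 3) k lam (ε * (|k| * δ)) M w) (hδ : 0 < δ) (hδ1 : δ ≤ 1)
    (hk : 1 ≤ |k|) (hkδ : |k| * δ ≤ 1) (hε : |ε| ≤ 1 / 144) (hg : Continuous g) :
    ‖((|k| * δ ^ 3 * k ^ 2 - ε * (|k| * δ) : ℝ) : ℂ) * innI w g‖ ≤ 42 * M * nL2 g / δ := by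
  have hgn := nL2_nonneg g
  have hcoeff : |(|k| * δ ^ 3 * k ^ 2 - ε * (|k| * δ))| ≤ 2 * (|k| * δ) := by
    have hkδ0 : 0 ≤ |k| * δ := by positivity
    have hsq : (|k| * δ) ^ 2 ≤ 1 := pow_le_one₀ hkδ0 hkδ
    have hdiff : |(|k| * δ) ^ 2 - ε| ≤ 2 :=
      abs_le.2 ⟨by linarith [abs_le.1 hε, sq_nonneg (|k| * δ)], by linarith [abs_le.1 hε]⟩
    rw [show |k| * δ ^ 3 * k ^ 2 - ε * (|k| * δ) = ((|k| * δ) ^ 2 - ε) * (|k| * δ) by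
      rw [← sq_abs k]; ring, abs_mul, abs_of_nonneg hkδ0]
    gcongr
  calc _ ≤ 2 * (|k| * δ) * (nL2 w * nL2 g) := by
        rw [norm_mul, Complex.norm_real, Real.norm_eq_abs]
        gcongr
        exact norm_innI_le h.continuous hg
    _ = 2 * (|k| * nL2 w * δ ^ 2) * nL2 g / δ := by field_simp
    _ ≤ 2 * (21 * M) * nL2 g / δ := by
        gcongr 2 * ?_ * nL2 g / δ
        exact h.mul_nL2_le hδ hδ1 hk ((le_abs_self ε).trans hε)
    _ = _ := by ring

theorem abs_mul_norm_innI_transport_le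
    (h : HasResolventBound (|k| * δ ^ 3) k lam (ε * (|k| * δ)) M w) (hδ : 0 < δ) (hδ1 : δ ≤ 1)
    (hk : 1 ≤ |k|) (hkδ : |k| * δ ≤ 1) (hε : |ε| ≤ 1 / 144) (hg : ContDiff ℝ 1 g)
    (hleft : g (-1) = 0) (hright : g 1 = 0) :
    |k| * ‖innI (fun y ↦ ((y - lam : ℝ) : ℂ) * w y) g‖
      ≤ M * (4 * nL2 (deriv g) + 43 * nL2 g / δ) := by
  have htransport : Complex.I * k * innI (fun y ↦ ((y - lam : ℝ) : ℂ) * w y) g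
      = innI (resolventOp (|k| * δ ^ 3) k lam (ε * (|k| * δ)) w) g
        - (((|k| * δ ^ 3 : ℝ) : ℂ) * innI (deriv w) (deriv g)
          + ((|k| * δ ^ 3 * k ^ 2 - ε * (|k| * δ) : ℝ) : ℂ) * innI w g) := by
    rw [innI_resolventOp h.contDiff hg hleft hright]
    ring
  calc |k| * ‖innI (fun y ↦ ((y - lam : ℝ) : ℂ) * w y) g‖
      = ‖Complex.I * k * innI (fun y ↦ ((y - lam : ℝ) : ℂ) * w y) g‖ := by simp
    _ ≤ M * (nL2 g / δ + nL2 (deriv g)) + (3 * M * nL2 (deriv g) + 42 * M * nL2 g / δ) := by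
        rw [htransport]
        refine (norm_sub_le _ _).trans (add_le_add ?_ ((norm_add_le _ _).trans (add_le_add ?_ ?_)))
        · have hM := h.bound_nonneg
          refine (h.norm_innI_resolventOp_le hg hleft hright).trans ?_
          gcongr
          exact le_div_self (nL2_nonneg g) hδ hδ1
        · exact h.norm_diffusion_innI_le hδ hδ1 hk ((le_abs_self ε).trans hε)
            (hg.continuous_deriv le_rfl)
        · exact h.norm_reaction_innI_le hδ hδ1 hk hkδ hε hg.continuous
    _ = _ := by ring

theorem abs_mul_norm_innI_boundaryBump_le
    (h : HasResolventBound (|k| * δ ^ 3) k lam (ε * (|k| * δ)) M w) (hδ : 0 < δ) (hδ1 : δ ≤ 1)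
    (hk : 1 ≤ |k|) (hε : ε ≤ 1 / 144) {j r : ℝ} (hj : j = 1 ∨ j = -1) (hr : 0 < r)
    (hrδ : r ^ 2 ≤ δ) (c : ℂ) :
    |k| * ‖innI (fun y ↦ ((y - lam : ℝ) : ℂ) * w y) fun y ↦ c * (boundaryBump j r y : ℂ)‖
      ≤ 46 * M * ‖c‖ * (r * √(|j - lam| + δ) / (δ * √δ)) := by
  have hw := h.continuous
  have hη := (contDiff_boundaryBump j r).continuous
  have hweight (x : ℝ) (hx : |x| ≤ |j - lam| + δ) :
      |x| ≤ √(|j - lam| + δ) * √(layerWeight δ x) := by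
    rw [← Real.sqrt_mul (by positivity)]
    refine Real.abs_le_sqrt ?_
    rw [← sq_abs, sq]
    gcongr
    exact abs_le_layerWeight δ x
  have hpointwise : ∀ y ∈ Ioo (-1 : ℝ) 1,
      ‖((y - lam : ℝ) : ℂ) * w y‖ * ‖c * (boundaryBump j r y : ℂ)‖
        ≤ ‖c‖ * √(|j - lam| + δ) * (‖((√(layerWeight δ (y - lam)) : ℝ) : ℂ) * w y‖
          * ‖(boundaryBump j r y : ℂ)‖) := by
    intro y hy
    rcases lt_or_ge (r ^ 2) |y - j| with hfar | hnear
    · simp [boundaryBump_eq_zero hj hr (Ioo_subset_Icc_self hy) hfar]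
    · have hy' := hweight (y - lam) (by linarith [abs_sub_le y j lam])
      simp only [norm_mul, Complex.norm_real, Real.norm_eq_abs, abs_of_nonneg (Real.sqrt_nonneg _)]
      calc |y - lam| * ‖w y‖ * (‖c‖ * |boundaryBump j r y|)
          ≤ √(|j - lam| + δ) * √(layerWeight δ (y - lam)) * ‖w y‖
              * (‖c‖ * |boundaryBump j r y|) := by gcongr
        _ = _ := by ring
  calc _ ≤ |k| * (‖c‖ * √(|j - lam| + δ)
          * (nL2 (fun y ↦ ((√(layerWeight δ (y - lam)) : ℝ) : ℂ) * w y) * (2 * r))) := by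
        gcongr
        refine (norm_innI_le_of_norm_mul_norm_le (by fun_prop) (by fun_prop) (by positivity)
          hpointwise).trans ?_
        gcongr
        · exact nL2_nonneg _
        · exact nL2_boundaryBump_le hj hr
    _ = ‖c‖ * √(|j - lam| + δ) * (2 * r)
          * (|k| * nL2 (fun y ↦ ((√(layerWeight δ (y - lam)) : ℝ) : ℂ) * w y)) := by ring
    _ ≤ ‖c‖ * √(|j - lam| + δ) * (2 * r) * (23 * M / (δ * √δ)) := by
        gcongr
        exact h.mul_nL2_sqrt_layerWeight_mul_le hδ hδ1 hk hε
    _ = _ := by ring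

theorem abs_mul_norm_innI_transport_le_of_apply_neg_eq_zero
    (h : HasResolventBound (|k| * δ ^ 3) k lam (ε * (|k| * δ)) M w) (hδ : 0 < δ) (hδ1 : δ ≤ 1)
    (hk : 1 ≤ |k|) (hkδ : |k| * δ ≤ 1) (hε : |ε| ≤ 1 / 144) {j : ℝ} (hj : j = 1 ∨ j = -1)
    (hg : ContDiff ℝ 1 g) (hgj : g (-j) = 0) :
    |k| * ‖innI (fun y ↦ ((y - lam : ℝ) : ℂ) * w y) g‖
      ≤ M * (4 * nL2 (deriv g) + 43 * nL2 g / δ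
        + 144 * ‖g j‖ / layerWidth δ (|j - lam| + δ)) := by
  have hM := h.bound_nonneg
  have hwc := h.continuous
  have hD : 0 < |j - lam| + δ := by positivity
  have hr := layerWidth_pos hδ hD
  have hrδ := layerWidth_sq_le hδ (le_add_of_nonneg_left (abs_nonneg (j - lam)))
  have hbalance := layerWidth_sq_mul_sqrt hδ hD
  set r := layerWidth δ (|j - lam| + δ)
  have huC := contDiff_boundaryCorrected j r hg
  have hends := boundaryCorrected_neg_one_and_one hj hr
    ((sq_le_one_iff₀ hr.le).1 (hrδ.trans hδ1)) hgj
  have hfrac : r * √(|j - lam| + δ) / (δ * √δ) = 1 / r := by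
    rw [← hbalance]
    field_simp
  calc |k| * ‖innI (fun y ↦ ((y - lam : ℝ) : ℂ) * w y) g‖
      ≤ M * (4 * nL2 (deriv (boundaryCorrected j r g)) + 43 * nL2 (boundaryCorrected j r g) / δ)
        + 46 * M * ‖g j‖ * (r * √(|j - lam| + δ) / (δ * √δ)) := by
        rw [innI_eq_innI_boundaryCorrected_add (by fun_prop) hg.continuous j r]
        refine (mul_le_mul_of_nonneg_left (norm_add_le _ _) (abs_nonneg k)).trans ?_
        rw [mul_add]
        exact add_le_add
          (h.abs_mul_norm_innI_transport_le hδ hδ1 hk hkδ hε huC hends.1 hends.2)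
          (h.abs_mul_norm_innI_boundaryBump_le hδ hδ1 hk ((le_abs_self ε).trans hε) hj hr hrδ _)
    _ ≤ M * (4 * (nL2 (deriv g) + ‖g j‖ * (3 / r)) + 43 * (nL2 g + ‖g j‖ * (2 * r)) / δ)
        + 46 * M * ‖g j‖ * (1 / r) := by
        rw [hfrac]
        gcongr
        · exact nL2_deriv_boundaryCorrected_le hj hr hg
        · exact nL2_boundaryCorrected_le hj hr hg.continuous
    _ = M * (4 * nL2 (deriv g) + 43 * nL2 g / δ + ‖g j‖ * (58 / r + 86 * (r / δ))) := by ring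
    _ ≤ M * (4 * nL2 (deriv g) + 43 * nL2 g / δ + ‖g j‖ * (58 / r + 86 * (1 / r))) := by
        gcongr M * (_ + ‖g j‖ * (_ + 86 * ?_))
        rw [div_le_div_iff₀ hδ hr]
        linarith
    _ = _ := by ring

theorem abs_mul_norm_innI_le
    (h : HasResolventBound (|k| * δ ^ 3) k lam (ε * (|k| * δ)) M w) (hδ : 0 < δ) (hδ1 : δ ≤ 1)
    (hk : 1 ≤ |k|) (hkδ : |k| * δ ≤ 1) (hε : |ε| ≤ 1 / 144) {j : ℝ} (hj : j = 1 ∨ j = -1)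
    (hf : ContDiff ℝ 1 f) (hfj : f (-j) = 0) :
    |k| * ‖innI w f‖ ≤ M * (
        42 * (δ ^ (-(3 : ℝ) / 2)
          * ⨆ y : ↥(Ioo (-1 : ℝ) 1 ∩ Ioo (lam - δ) (lam + δ)), ‖f y‖)
        + 576 * (‖f j‖ * (|j - lam| + δ) ^ (-(3 : ℝ) / 4) * δ ^ (-(3 : ℝ) / 4))
        + 4 * nL2 (deriv fun y ↦ f y * (regularizedInv δ (y - lam) : ℂ))
        + 43 * (δ⁻¹ * nL2 fun y ↦ f y * (regularizedInv δ (y - lam) : ℂ))) := by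
  have hM := h.bound_nonneg
  have hχ : ContDiff ℝ 1 fun y ↦ regularizedInv δ (y - lam) :=
    (contDiff_regularizedInv hδ).comp (contDiff_id.sub contDiff_const)
  set S := ⨆ y : ↥(Ioo (-1 : ℝ) 1 ∩ Ioo (lam - δ) (lam + δ)), ‖f y‖
  set g : ℝ → ℂ := fun y ↦ f y * (regularizedInv δ (y - lam) : ℂ)
  have hg : ContDiff ℝ 1 g := hf.mul (contDiff_ofReal_comp hχ)
  have hboundary : ‖g j‖ / layerWidth δ (|j - lam| + δ)
      ≤ 4 * (‖f j‖ * (|j - lam| + δ) ^ (-(3 : ℝ) / 4) * δ ^ (-(3 : ℝ) / 4)) := by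
    rw [norm_mul, Complex.norm_real, Real.norm_eq_abs, mul_div_assoc, mul_assoc ‖f j‖,
      mul_left_comm 4]
    exact mul_le_mul_of_nonneg_left (abs_regularizedInv_div_layerWidth_le hδ _) (norm_nonneg _)
  have hlayer := h.abs_mul_norm_innI_one_sub_mul_le hδ hδ1 hk ((le_abs_self ε).trans hε)
    (Real.iSup_nonneg fun _ ↦ norm_nonneg _) fun y hy ↦ norm_le_iSup_norm_of_subset_Icc
      hf.continuous (inter_subset_left.trans Ioo_subset_Icc_self) hy
  have htransport := h.abs_mul_norm_innI_transport_le_of_apply_neg_eq_zero hδ hδ1 hk hkδ hε hj hg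
    (show g (-j) = 0 by simp [g, hfj])
  have hrpow : √δ / δ ^ 2 = δ ^ (-(3 : ℝ) / 2) := by
    rw [Real.sqrt_eq_rpow, ← Real.rpow_natCast, ← Real.rpow_sub hδ]
    norm_num
  rw [innI_eq_innI_add_innI_mul hχ.continuous h.continuous hf.continuous lam]
  calc _ ≤ 42 * M * S * δ ^ (-(3 : ℝ) / 2) + M * (4 * nL2 (deriv g) + 43 * nL2 g / δ
          + 144 * (‖g j‖ / layerWidth δ (|j - lam| + δ))) := by
        refine (mul_le_mul_of_nonneg_left (norm_add_le _ _) (abs_nonneg k)).trans ?_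
        rw [mul_add, ← hrpow, ← mul_div_assoc 144]
        exact add_le_add hlayer htransport
    _ ≤ 42 * M * S * δ ^ (-(3 : ℝ) / 2) + M * (4 * nL2 (deriv g) + 43 * nL2 g / δ + 144
          * (4 * (‖f j‖ * (|j - lam| + δ) ^ (-(3 : ℝ) / 4) * δ ^ (-(3 : ℝ) / 4)))) := by gcongr
    _ = _ := by ring

end HasResolventBound

end Pairing

section Scaling

variable {ν k : ℝ}

theorem eq_abs_mul_layer_pow_three (hν : 0 ≤ ν) (hk : k ≠ 0) :
    ν = |k| * (ν ^ ((1 : ℝ) / 3) * |k| ^ (-(1 : ℝ) / 3)) ^ 3 := by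
  have hk' := abs_pos.2 hk
  rw [mul_pow, ← Real.rpow_mul_natCast hν, ← Real.rpow_mul_natCast hk'.le]
  norm_num [Real.rpow_neg_one]
  field_simp

theorem abs_mul_layer_eq (k : ℝ) :
    |k| * (ν ^ ((1 : ℝ) / 3) * |k| ^ (-(1 : ℝ) / 3)) = ν ^ ((1 : ℝ) / 3) * |k| ^ ((2 : ℝ) / 3) := by
  rw [mul_left_comm, ← Real.rpow_one_add' (abs_nonneg k) (by norm_num)]
  norm_num

theorem abs_mul_layer_le_one (hν : 0 ≤ ν) (hk : k ≠ 0) (hνk : ν * k ^ 2 ≤ 1) :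
    |k| * (ν ^ ((1 : ℝ) / 3) * |k| ^ (-(1 : ℝ) / 3)) ≤ 1 := by
  have hcube := eq_abs_mul_layer_pow_three hν hk
  set δ := ν ^ ((1 : ℝ) / 3) * |k| ^ (-(1 : ℝ) / 3)
  refine (pow_le_one_iff_of_nonneg (by positivity) three_ne_zero).1 ?_
  calc (|k| * δ) ^ 3 = |k| * δ ^ 3 * |k| ^ 2 := by ring
    _ ≤ 1 := by rwa [← hcube, sq_abs]

end Scaling

theorem statement4_general {ν k ε lam δ j M : ℝ} {w f : ℝ → ℂ} (hν : 0 < ν) (hk : 1 ≤ |k|)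
    (hνk : ν * k ^ 2 ≤ 1) (hε : |ε| ≤ 1 / 144)
    (hδ : δ = ν ^ ((1 : ℝ) / 3) * |k| ^ (-(1 : ℝ) / 3))
    (h : HasResolventBound ν k lam (ε * ν ^ ((1 : ℝ) / 3) * |k| ^ ((2 : ℝ) / 3)) M w)
    (hj : j = 1 ∨ j = -1) (hf : ContDiff ℝ 1 f) (hfj : f (-j) = 0) :
    ‖innI w f‖ ≤ 1000 * |k|⁻¹ * M *
      (δ ^ (-(3 : ℝ) / 2) * (⨆ y : ↥(Ioo (-1 : ℝ) 1 ∩ Ioo (lam - δ) (lam + δ)), ‖f y‖)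
        + ‖f j‖ * (|j - lam| + δ) ^ (-(3 : ℝ) / 4) * δ ^ (-(3 : ℝ) / 4)
        + (nL2 (fun y ↦ f y * (regularizedInv δ (y - lam) : ℂ)) ^ 2
          + nL2 (deriv fun y ↦ f y * (regularizedInv δ (y - lam) : ℂ)) ^ 2) ^ ((1 : ℝ) / 2)
        + δ⁻¹ * nL2 (fun y ↦ f y * (regularizedInv δ (y - lam) : ℂ))) := by
  have hk0 : k ≠ 0 := abs_pos.1 (zero_lt_one.trans_le hk)
  have hδ0 : 0 < δ := hδ ▸ by positivity
  have hνδ : ν = |k| * δ ^ 3 := hδ ▸ eq_abs_mul_layer_pow_three hν.le hk0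
  have hkδ : |k| * δ ≤ 1 := hδ ▸ abs_mul_layer_le_one hν.le hk0 hνk
  have hδ1 : δ ≤ 1 := (le_mul_of_one_le_left hδ0.le hk).trans hkδ
  rw [mul_assoc ε, ← abs_mul_layer_eq, ← hδ, hνδ] at h
  have hM := h.bound_nonneg
  have hmain := h.abs_mul_norm_innI_le hδ0 hδ1 hk hkδ hε hj hf hfj
  set S := ⨆ y : ↥(Ioo (-1 : ℝ) 1 ∩ Ioo (lam - δ) (lam + δ)), ‖f y‖
  set g : ℝ → ℂ := fun y ↦ f y * (regularizedInv δ (y - lam) : ℂ)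
  have hS : 0 ≤ S := Real.iSup_nonneg fun _ ↦ norm_nonneg _
  have hg := nL2_nonneg g
  have hderiv : nL2 (deriv g) ≤ (nL2 g ^ 2 + nL2 (deriv g) ^ 2) ^ ((1 : ℝ) / 2) := by
    rw [← Real.sqrt_eq_rpow]
    exact Real.le_sqrt_of_sq_le (le_add_of_nonneg_left (sq_nonneg _))
  rw [mul_assoc, mul_assoc, mul_left_comm, ← div_eq_inv_mul, le_div_iff₀' (abs_pos.2 hk0),
    mul_left_comm]
  refine hmain.trans (mul_le_mul_of_nonneg_left ?_ hM)
  have := nL2_nonneg (deriv g)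
  rw [mul_add, mul_add, mul_add]
  gcongr <;> norm_num

/-- Weak type resolvent estimate with Navier-slip boundary condition. -/
theorem statement4 :
    ∃ ε₀ C : ℝ, 0 < ε₀ ∧ ε₀ < 1 ∧ 0 < C ∧
      ∀ (ν : ℝ) (k : ℤ) (ε lam δ : ℝ) (w F f fχ : ℝ → ℂ) (χ : ℝ → ℝ) (j : ℝ) (M : ℝ),
        0 < ν → ν ≤ 1 → 1 ≤ |k| → ν * (k:ℝ)^2 ≤ 1 → 0 < ε → ε ≤ ε₀ →
        δ = ν ^ ((1:ℝ)/3) * |(k:ℝ)| ^ (-(1:ℝ)/3) →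
        ContDiff ℝ 2 w → w (-1) = 0 → w 1 = 0 →
        (F = fun y : ℝ => -(ν : ℂ) * (deriv (deriv w) y - (k:ℂ)^2 * w y)
            + Complex.I * (k:ℂ) * ((y:ℂ) - (lam:ℂ)) * w y
            - ((ε * ν ^ ((1:ℝ)/3) * |(k:ℝ)| ^ ((2:ℝ)/3) : ℝ) : ℂ) * w y) →
        0 ≤ M → Dominates F M →
        (χ = fun y : ℝ => if δ ≤ |y - lam| then (y - lam)⁻¹
            else 2 * (y - lam) / δ^2 - (y - lam)^3 / δ^4) →
        (j = 1 ∨ j = -1) →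
        ContDiff ℝ 1 f → f (-j) = 0 →
        (fχ = fun y : ℝ => f y * ((χ y : ℝ) : ℂ)) →
        ‖innI w f‖ ≤ C * |(k:ℝ)|⁻¹ * M *
          ( δ ^ (-(3:ℝ)/2) *
              (⨆ y : ↥(Set.Ioo (-1:ℝ) 1 ∩ Set.Ioo (lam - δ) (lam + δ)), ‖f (y : ℝ)‖)
            + ‖f j‖ * (|j - lam| + δ) ^ (-(3:ℝ)/4) * δ ^ (-(3:ℝ)/4)
            + (nL2 fχ ^ 2 + nL2 (deriv fχ) ^ 2) ^ ((1:ℝ)/2)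
            + δ⁻¹ * nL2 fχ ) := by
  refine ⟨1 / 144, 1000, by norm_num, by norm_num, by norm_num, ?_⟩
  rintro ν k ε lam δ w _ f _ _ j M hν - hk hνk hε hε₀ hδ hw hleft hright rfl hM hF rfl hj hf hfj rfl
  exact statement4_general hν (mod_cast hk) hνk (by rwa [abs_of_pos hε]) hδ
    ⟨hw, hleft, hright, hM, by
      unfold resolventOp
      simpa only [Complex.ofReal_intCast] using hF⟩ hj hf hfj
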